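/- For every L > 0 there exists λ₀ > 0 such that for every λ ∈ (0, λ₀] there exists a C^∞ function k : ℝ² → ℝ solving the kernel model (kEq) with parameter λ that additionally satisfies λ - (1/2) ∫_0^L (∂_y k)(x,0)² dx > 0. -/

import Mathlib

open MeasureTheory Real

/-- Partial derivative in the first variable. -/
noncomputable def pd1 (f : ℝ × ℝ → ℝ) : ℝ × ℝ → ℝ := fun q => deriv (fun s => f (s, q.2)) q.1

/-- Partial derivative in the second variable. -/
noncomputable def pd2 (f : ℝ × ℝ → ℝ) : ℝ × ℝ → ℝ := fun q => deriv (fun s => f (q.1, s)) q.2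

/-- `k` solves the kernel model (kEq) with parameter `lam` on the triangle `Δ_L`. -/
def SolvesKEq (L lam : ℝ) (k : ℝ × ℝ → ℝ) : Prop :=
  (∀ x y : ℝ, 0 ≤ y → y ≤ x → x ≤ L →
      pd1 (pd1 (pd1 k)) (x, y) + pd2 (pd2 (pd2 k)) (x, y) + pd2 k (x, y) + pd1 k (x, y)
        = -lam * k (x, y)) ∧
  (∀ x : ℝ, 0 ≤ x → x ≤ L → k (x, x) = 0) ∧
  (∀ x : ℝ, 0 ≤ x → x ≤ L → k (x, 0) = 0) ∧
  (∀ x : ℝ, 0 ≤ x → x ≤ L → pd1 k (x, x) = lam * x / 3)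

/-!
In the coordinates `s = x - y`, `t = y` the kernel equation reads
`3 ∂ₛ²∂ₜ k = 3 ∂ₛ∂ₜ² k - ∂ₜ³ k - ∂ₜ k - λ k` with `k = 0` on both axes and `∂ₛ k (0, t) = λ t / 3`.
This is a recurrence for the Taylor coefficients of `k`; for `ρ ≥ 2` and `|λ| ≤ ρ` those of order
`m` in `s` are at most `|λ| ρ ^ m` in absolute value. Divided by `ρ ^ m` they form a bounded double
sequence `v` of norm at most `|λ|`, and on such sequences `∂ₓ` and `∂ᵧ` become commuting bounded
operators `A` and `B`. Hence `k (x, y) = (exp (x A) exp (y B) v) (0, 0)` is smooth. As `A` and `B`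
do not depend on `λ`, `∂ᵧ k (·, 0)` is `O(λ)` on `[0, L]`; the quantity in question is `λ - O(λ²)`.
-/

open scoped BoundedContinuousFunction

section ExpPairing

variable {E : Type*} [NormedAddCommGroup E] [NormedSpace ℝ E]

/-- The functional `v ↦ φ (exp (x A) (exp (y B) v))` at `q = (x, y)`. For commuting `A` and `B`, its
values on a fixed `v` form a function on the plane whose partial derivatives correspond to applying
`A` and `B` to `v`. -/
noncomputable def expPairing (φ : E →L[ℝ] ℝ) (A B : E →L[ℝ] E) (q : ℝ × ℝ) : E →L[ℝ] ℝ :=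
  φ ∘L (NormedSpace.exp (q.1 • A) * NormedSpace.exp (q.2 • B))

lemma expPairing_axis (φ : E →L[ℝ] ℝ) (A B : E →L[ℝ] E) (x : ℝ) (v : E) :
    expPairing φ A B (x, 0) v = φ (NormedSpace.exp (x • A) v) := by
  simp [expPairing]

variable [CompleteSpace E] (φ : E →L[ℝ] ℝ) {A B : E →L[ℝ] E}

lemma expPairing_diag (hAB : Commute A B) (x : ℝ) (v : E) :
    expPairing φ A B (x, x) v = φ (NormedSpace.exp (x • (A + B)) v) := by
  let : NormedAlgebra ℚ (E →L[ℝ] E) := NormedAlgebra.restrictScalars ℚ ℝ _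
  rw [smul_add, NormedSpace.exp_add_of_commute ((hAB.smul_left x).smul_right x)]
  rfl

lemma contDiff_expPairing (A B : E →L[ℝ] E) {n : WithTop ℕ∞} : ContDiff ℝ n (expPairing φ A B) := by
  have contDiff_exp : ContDiff ℝ n (NormedSpace.exp : (E →L[ℝ] E) → E →L[ℝ] E) :=
    contDiff_iff_contDiffAt.2 fun T => (NormedSpace.exp_analytic (𝕂 := ℝ) T).contDiffAt
  have contDiff_left : ContDiff ℝ n fun q : ℝ × ℝ => NormedSpace.exp (q.1 • A) :=
    contDiff_exp.comp (contDiff_fst.smul contDiff_const)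
  have contDiff_right : ContDiff ℝ n fun q : ℝ × ℝ => NormedSpace.exp (q.2 • B) :=
    contDiff_exp.comp (contDiff_snd.smul contDiff_const)
  exact contDiff_const.clm_comp (contDiff_left.mul contDiff_right)

lemma pd1_expPairing (hAB : Commute A B) (v : E) :
    pd1 (fun q => expPairing φ A B q v) = fun q => expPairing φ A B q (A v) := by
  funext q
  have hasDerivAt_exp := (hasDerivAt_exp_smul_const (𝕂 := ℝ) A q.1).mul_const
    (NormedSpace.exp (q.2 • B))
  have commute_exp : Commute A (NormedSpace.exp (q.2 • B)) := (hAB.smul_right q.2).exp_right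
  refine (φ.hasFDerivAt.comp_hasDerivAt q.1
    (hasDerivAt_exp.clm_apply (hasDerivAt_const q.1 v))).deriv.trans ?_
  rw [mul_assoc, commute_exp.eq]
  simp [expPairing]

lemma pd2_expPairing (A B : E →L[ℝ] E) (v : E) :
    pd2 (fun q => expPairing φ A B q v) = fun q => expPairing φ A B q (B v) := by
  funext q
  have hasDerivAt_exp := (hasDerivAt_exp_smul_const (𝕂 := ℝ) B q.2).const_mul
    (NormedSpace.exp (q.1 • A))
  refine (φ.hasFDerivAt.comp_hasDerivAt q.2
    (hasDerivAt_exp.clm_apply (hasDerivAt_const q.2 v))).deriv.trans ?_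
  simp [expPairing]

lemma exists_abs_expPairing_le (A B : E →L[ℝ] E) {s : Set (ℝ × ℝ)} (hs : IsCompact s) :
    ∃ C : ℝ, ∀ q ∈ s, ∀ v : E, |expPairing φ A B q v| ≤ C * ‖v‖ := by
  obtain ⟨C, norm_le⟩ := hs.exists_bound_of_continuousOn
    (contDiff_expPairing φ A B (n := 0)).continuous.continuousOn
  exact ⟨C, fun q hq v => (expPairing φ A B q).le_of_opNorm_le (norm_le q hq) v⟩

lemma hasSum_apply_exp_smul (T : E →L[ℝ] E) (x : ℝ) (v : E) :
    HasSum (fun n : ℕ => (n.factorial : ℝ)⁻¹ * x ^ n * φ ((T ^ n) v))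
      (φ (NormedSpace.exp (x • T) v)) := by
  have hasSum_exp := NormedSpace.exp_series_hasSum_exp' (𝕂 := ℝ) (x • T)
  simpa [smul_pow, mul_assoc, Function.comp_def] using
    (hasSum_exp.mapL (ContinuousLinearMap.apply ℝ E v)).mapL φ

variable {φ}

lemma apply_exp_smul_eq_mul {T : E →L[ℝ] E} {v : E} (h : ∀ n ≠ 1, φ ((T ^ n) v) = 0) (x : ℝ) :
    φ (NormedSpace.exp (x • T) v) = x * φ (T v) := by
  refine (hasSum_apply_exp_smul φ T x v).unique ?_
  simpa using hasSum_single (f := fun n : ℕ => (n.factorial : ℝ)⁻¹ * x ^ n * φ ((T ^ n) v))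
    1 fun n hn => by rw [h n hn, mul_zero]

lemma apply_exp_smul_eq_zero {T : E →L[ℝ] E} {v : E} (h : ∀ n, φ ((T ^ n) v) = 0) (x : ℝ) :
    φ (NormedSpace.exp (x • T) v) = 0 := by
  rw [apply_exp_smul_eq_mul (fun n _ => h n), ← pow_one T, h 1, mul_zero]

lemma solvesKEq_expPairing {lam : ℝ} {v : E} (hAB : Commute A B)
    (equation : A (A (A v)) + B (B (B v)) + B v + A v = -lam • v)
    (diag : ∀ n, φ (((A + B) ^ n) v) = 0) (axis : ∀ n, φ ((A ^ n) v) = 0)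
    (deriv_diag_one : φ ((A + B) (A v)) = lam / 3)
    (deriv_diag : ∀ n ≠ 1, φ (((A + B) ^ n) (A v)) = 0) (L : ℝ) :
    SolvesKEq L lam fun q => expPairing φ A B q v := by
  refine ⟨fun x y _ _ _ => ?_, fun x _ _ => ?_, fun x _ _ => ?_, fun x _ _ => ?_⟩
  · simp only [pd1_expPairing φ hAB, pd2_expPairing, ← map_add, equation, map_smul, smul_eq_mul]
  · exact (expPairing_diag φ hAB x v).trans (apply_exp_smul_eq_zero diag x)
  · exact (expPairing_axis φ A B x v).trans (apply_exp_smul_eq_zero axis x)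
  · calc pd1 (fun q => expPairing φ A B q v) (x, x) = expPairing φ A B (x, x) (A v) :=
          congrFun (pd1_expPairing φ hAB v) (x, x)
      _ = x * φ ((A + B) (A v)) := by
          rw [expPairing_diag φ hAB, apply_exp_smul_eq_mul deriv_diag]
      _ = lam * x / 3 := by rw [deriv_diag_one]; ring

end ExpPairing

section KernelCoeff

/-- The Taylor coefficients of the kernel: the value at the origin of `∂ₛ ^ m ∂ₜ ^ n k`, where
`s = x - y` and `t = y`. -/
noncomputable def kernelCoeff (lam : ℝ) : ℕ → ℕ → ℝ
  | 0, _ => 0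
  | 1, n => if n = 1 then lam / 3 else 0
  | _ + 2, 0 => 0
  | m + 2, n + 1 => kernelCoeff lam (m + 1) (n + 2)
      - (kernelCoeff lam m (n + 3) + kernelCoeff lam m (n + 1) + lam * kernelCoeff lam m n) / 3

lemma kernelCoeff_add_two_succ (lam : ℝ) (m n : ℕ) :
    kernelCoeff lam (m + 2) (n + 1) = kernelCoeff lam (m + 1) (n + 2)
      - (kernelCoeff lam m (n + 3) + kernelCoeff lam m (n + 1)
        + lam * kernelCoeff lam m n) / 3 := by
  rw [kernelCoeff]

lemma kernelCoeff_zero_right (lam : ℝ) (m : ℕ) : kernelCoeff lam m 0 = 0 := by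
  rcases m with _ | _ | _ <;> simp [kernelCoeff]

variable {ρ lam : ℝ}

lemma abs_kernelCoeff_le (hρ : 2 ≤ ρ) (hlam : |lam| ≤ ρ) (m n : ℕ) :
    |kernelCoeff lam m n| ≤ |lam| * ρ ^ m := by
  have bound_nonneg (i : ℕ) : 0 ≤ |lam| * ρ ^ i := by positivity
  induction m using Nat.twoStepInduction generalizing n with
  | zero => simp [kernelCoeff]
  | one =>
    rw [kernelCoeff, pow_one]
    split_ifs
    · rw [abs_div, abs_of_pos (three_pos : (0 : ℝ) < 3)]
      nlinarith [abs_nonneg lam]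
    · simpa using bound_nonneg 1
  | more m bound bound_succ =>
    rcases n with _ | n
    · simpa only [kernelCoeff_zero_right, abs_zero] using bound_nonneg (m + 2)
    have lam_mul_bound : |lam * kernelCoeff lam m n| ≤ ρ * (|lam| * ρ ^ m) := by
      rw [abs_mul]
      gcongr
      exact bound n
    calc |kernelCoeff lam (m + 2) (n + 1)|
        ≤ |kernelCoeff lam (m + 1) (n + 2)| + (|kernelCoeff lam m (n + 3)|
          + |kernelCoeff lam m (n + 1)| + |lam * kernelCoeff lam m n|) / 3 := by
          rw [kernelCoeff_add_two_succ]
          refine (abs_sub _ _).trans ?_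
          rw [abs_div, abs_of_pos (three_pos : (0 : ℝ) < 3)]
          gcongr
          exact abs_add_three _ _ _
      _ ≤ |lam| * ρ ^ (m + 1) + (|lam| * ρ ^ m + |lam| * ρ ^ m + ρ * (|lam| * ρ ^ m)) / 3 := by
          gcongr
          exacts [bound_succ _, bound _, bound _]
      _ = |lam| * ρ ^ m * (ρ + (2 + ρ) / 3) := by ring
      _ ≤ |lam| * ρ ^ m * ρ ^ 2 := by
          gcongr
          nlinarith
      _ = |lam| * ρ ^ (m + 2) := by ring

lemma norm_kernelCoeff_div_le (hρ : 2 ≤ ρ) (hlam : |lam| ≤ ρ) (m n : ℕ) :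
    ‖kernelCoeff lam m n / ρ ^ m‖ ≤ |lam| := by
  rw [norm_div, norm_pow, Real.norm_of_nonneg (zero_le_two.trans hρ)]
  exact div_le_of_le_mul₀ (by positivity) (abs_nonneg lam) (abs_kernelCoeff_le hρ hlam m n)

/-- The Taylor coefficients of the kernel, divided by `ρ ^ m` to form a bounded double sequence. -/
noncomputable def kernelData (hρ : 2 ≤ ρ) (hlam : |lam| ≤ ρ) : ℕ × ℕ →ᵇ ℝ :=
  BoundedContinuousFunction.ofNormedAddCommGroupDiscrete
    (fun p => kernelCoeff lam p.1 p.2 / ρ ^ p.1) |lam| fun _ => norm_kernelCoeff_div_le hρ hlam _ _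

lemma kernelData_apply (hρ : 2 ≤ ρ) (hlam : |lam| ≤ ρ) (m n : ℕ) :
    kernelData hρ hlam (m, n) = kernelCoeff lam m n / ρ ^ m :=
  rfl

lemma norm_kernelData_le (hρ : 2 ≤ ρ) (hlam : |lam| ≤ ρ) : ‖kernelData hρ hlam‖ ≤ |lam| :=
  (BoundedContinuousFunction.norm_le (abs_nonneg lam)).2 fun _ =>
    norm_kernelCoeff_div_le hρ hlam _ _

end KernelCoeff

section DoubleSequences

/-- The derivative `∂ₓ = ∂ₛ` on Taylor coefficients divided by `ρ ^ m`, where `s = x - y`,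
`t = y` and `m` is the order in `s`. -/
noncomputable def coeffDerivX (ρ : ℝ) : (ℕ × ℕ →ᵇ ℝ) →L[ℝ] ℕ × ℕ →ᵇ ℝ :=
  ρ • BoundedContinuousFunction.compContinuousCLM ℝ ℝ
    ⟨fun p => (p.1 + 1, p.2), continuous_of_discreteTopology⟩

/-- The derivative `∂ₓ + ∂ᵧ = ∂ₜ` along the diagonal on Taylor coefficients in `s = x - y` and
`t = y`. -/
noncomputable def coeffDerivDiag : (ℕ × ℕ →ᵇ ℝ) →L[ℝ] ℕ × ℕ →ᵇ ℝ :=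
  BoundedContinuousFunction.compContinuousCLM ℝ ℝ
    ⟨fun p => (p.1, p.2 + 1), continuous_of_discreteTopology⟩

/-- The derivative `∂ᵧ = ∂ₜ - ∂ₛ` on rescaled Taylor coefficients. -/
noncomputable def coeffDerivY (ρ : ℝ) : (ℕ × ℕ →ᵇ ℝ) →L[ℝ] ℕ × ℕ →ᵇ ℝ :=
  coeffDerivDiag - coeffDerivX ρ

variable (ρ : ℝ) (v : ℕ × ℕ →ᵇ ℝ) (m n : ℕ)

lemma coeffDerivX_apply : coeffDerivX ρ v (m, n) = ρ * v (m + 1, n) :=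
  rfl

lemma coeffDerivDiag_apply : coeffDerivDiag v (m, n) = v (m, n + 1) :=
  rfl

lemma coeffDerivY_apply : coeffDerivY ρ v (m, n) = v (m, n + 1) - ρ * v (m + 1, n) :=
  rfl

lemma coeffDerivX_add_coeffDerivY : coeffDerivX ρ + coeffDerivY ρ = coeffDerivDiag := by
  ext v ⟨m, n⟩
  exact add_sub_cancel (ρ * v (m + 1, n)) (v (m, n + 1))

lemma commute_coeffDerivX_coeffDerivY : Commute (coeffDerivX ρ) (coeffDerivY ρ) := by
  ext v ⟨m, n⟩
  exact mul_sub ρ (v (m + 1, n + 1)) (ρ * v (m + 2, n))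

lemma coeffDerivX_pow_apply (i : ℕ) : (coeffDerivX ρ ^ i) v (m, n) = ρ ^ i * v (m + i, n) := by
  induction i generalizing m with
  | zero => simp
  | succ i ih =>
    rw [pow_succ', mul_apply_eq_comp, coeffDerivX_apply, ih, Nat.add_right_comm, pow_succ']
    ring_nf

lemma coeffDerivDiag_pow_apply (i : ℕ) : (coeffDerivDiag ^ i) v (m, n) = v (m, n + i) := by
  induction i generalizing n with
  | zero => rfl
  | succ i ih =>
    rw [pow_succ', mul_apply_eq_comp, coeffDerivDiag_apply, ih, Nat.add_right_comm]
    rfl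

end DoubleSequences

section Kernel

variable {ρ lam : ℝ}

lemma coeffDeriv_kernelData_eq (hρ : 2 ≤ ρ) (hlam : |lam| ≤ ρ) :
    coeffDerivX ρ (coeffDerivX ρ (coeffDerivX ρ (kernelData hρ hlam)))
      + coeffDerivY ρ (coeffDerivY ρ (coeffDerivY ρ (kernelData hρ hlam)))
      + coeffDerivY ρ (kernelData hρ hlam) + coeffDerivX ρ (kernelData hρ hlam)
      = -lam • kernelData hρ hlam := by
  ext ⟨m, n⟩
  simp only [BoundedContinuousFunction.add_apply, BoundedContinuousFunction.smul_apply,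
    coeffDerivX_apply, coeffDerivY_apply, kernelData_apply, smul_eq_mul, add_assoc,
    Nat.reduceAdd, kernelCoeff_add_two_succ]
  field_simp
  ring

/-- The solution of (kEq) with Taylor coefficients `kernelCoeff lam`; the scale `ρ` only serves to
make the coefficients bounded. -/
noncomputable def kernel (hρ : 2 ≤ ρ) (hlam : |lam| ≤ ρ) (q : ℝ × ℝ) : ℝ :=
  expPairing (BoundedContinuousFunction.evalCLM ℝ (0, 0)) (coeffDerivX ρ) (coeffDerivY ρ) q
    (kernelData hρ hlam)

lemma contDiff_kernel (hρ : 2 ≤ ρ) (hlam : |lam| ≤ ρ) {n : WithTop ℕ∞} :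
    ContDiff ℝ n (kernel hρ hlam) :=
  (contDiff_expPairing _ _ _).clm_apply contDiff_const

lemma solvesKEq_kernel (hρ : 2 ≤ ρ) (hlam : |lam| ≤ ρ) (L : ℝ) :
    SolvesKEq L lam (kernel hρ hlam) := by
  have ρ_ne_zero : ρ ≠ 0 := by positivity
  refine solvesKEq_expPairing (commute_coeffDerivX_coeffDerivY ρ)
    (coeffDeriv_kernelData_eq hρ hlam) (fun n => ?_) (fun n => ?_) ?_ (fun n hn => ?_) L
  · rw [coeffDerivX_add_coeffDerivY, BoundedContinuousFunction.evalCLM_apply,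
      coeffDerivDiag_pow_apply, kernelData_apply]
    simp [kernelCoeff]
  · rw [BoundedContinuousFunction.evalCLM_apply, coeffDerivX_pow_apply, kernelData_apply,
      kernelCoeff_zero_right, zero_div, mul_zero]
  · rw [coeffDerivX_add_coeffDerivY, BoundedContinuousFunction.evalCLM_apply,
      coeffDerivDiag_apply, coeffDerivX_apply, kernelData_apply]
    simp [kernelCoeff, mul_div_cancel₀, ρ_ne_zero]
  · rw [coeffDerivX_add_coeffDerivY, BoundedContinuousFunction.evalCLM_apply,
      coeffDerivDiag_pow_apply, coeffDerivX_apply, kernelData_apply]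
    simp [kernelCoeff, hn]

lemma exists_abs_pd2_kernel_le (hρ : 2 ≤ ρ) {s : Set (ℝ × ℝ)} (hs : IsCompact s) :
    ∃ C : ℝ, ∀ (lam : ℝ) (hlam : |lam| ≤ ρ), ∀ q ∈ s, |pd2 (kernel hρ hlam) q| ≤ C * |lam| := by
  obtain ⟨C, pairing_le⟩ := exists_abs_expPairing_le
    (BoundedContinuousFunction.evalCLM ℝ ((0, 0) : ℕ × ℕ)) (coeffDerivX ρ) (coeffDerivY ρ) hs
  refine ⟨|C| * ‖coeffDerivY ρ‖, fun lam hlam q hq => ?_⟩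
  have pd2_kernel_apply : pd2 (kernel hρ hlam) q =
      expPairing (BoundedContinuousFunction.evalCLM ℝ (0, 0)) (coeffDerivX ρ) (coeffDerivY ρ) q
        (coeffDerivY ρ (kernelData hρ hlam)) :=
    congrFun (pd2_expPairing _ _ _ _) q
  calc |pd2 (kernel hρ hlam) q| ≤ C * ‖coeffDerivY ρ (kernelData hρ hlam)‖ := by
        rw [pd2_kernel_apply]
        exact pairing_le q hq _
    _ ≤ |C| * (‖coeffDerivY ρ‖ * |lam|) := by
        gcongr
        · exact le_abs_self C
        · exact (coeffDerivY ρ).le_opNorm_of_le (norm_kernelData_le hρ hlam)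
    _ = |C| * ‖coeffDerivY ρ‖ * |lam| := (mul_assoc _ _ _).symm

end Kernel

lemma integral_sq_le_of_abs_le {f : ℝ → ℝ} {a b M : ℝ} (hab : a ≤ b)
    (hf : ∀ x ∈ Set.Ioc a b, |f x| ≤ M) : ∫ x in a..b, f x ^ 2 ≤ M ^ 2 * (b - a) := by
  have norm_integral_le : ‖∫ x in a..b, f x ^ 2‖ ≤ M ^ 2 * |b - a| := by
    refine intervalIntegral.norm_integral_le_of_norm_le_const fun x hx => ?_
    rw [Set.uIoc_of_le hab] at hx
    rw [norm_pow, Real.norm_eq_abs]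
    gcongr
    exact hf x hx
  rw [abs_of_nonneg (sub_nonneg.2 hab)] at norm_integral_le
  exact (Real.le_norm_self _).trans norm_integral_le

/-- for every `L > 0`, for all sufficiently small `λ > 0` there is a smooth
solution `k` of (kEq) with `λ - (1/2)‖k_y(·,0)‖²_{L²(0,L)} > 0`. -/
theorem stmt_12 (L : ℝ) (hL : 0 < L) :
    ∃ lam₀ : ℝ, 0 < lam₀ ∧ ∀ lam : ℝ, 0 < lam → lam ≤ lam₀ →
      ∃ k : ℝ × ℝ → ℝ, ContDiff ℝ (⊤ : ℕ∞) k ∧ SolvesKEq L lam k ∧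
        0 < lam - (1 / 2) * ∫ x in (0:ℝ)..L, (pd2 k (x, 0)) ^ 2 := by
  obtain ⟨C, abs_pd2_le⟩ := exists_abs_pd2_kernel_le (le_refl (2 : ℝ))
    (isCompact_Icc.prod isCompact_singleton : IsCompact (Set.Icc 0 L ×ˢ {(0 : ℝ)}))
  refine ⟨1 / (C ^ 2 * L + 1), by positivity, fun lam lam_pos lam_le => ?_⟩
  have lam_mul_le : lam * (C ^ 2 * L + 1) ≤ 1 := (le_div_iff₀ (by positivity)).1 lam_le
  have abs_lam_le : |lam| ≤ 2 := by
    rw [abs_of_pos lam_pos]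
    nlinarith [mul_nonneg lam_pos.le (by positivity : 0 ≤ C ^ 2 * L)]
  refine ⟨kernel le_rfl abs_lam_le, contDiff_kernel _ _, solvesKEq_kernel _ _ L, ?_⟩
  have integral_le : ∫ x in (0:ℝ)..L, (pd2 (kernel le_rfl abs_lam_le) (x, 0)) ^ 2
      ≤ (C * lam) ^ 2 * (L - 0) := by
    refine integral_sq_le_of_abs_le hL.le fun x hx => ?_
    simpa only [abs_of_pos lam_pos] using
      abs_pd2_le lam abs_lam_le (x, 0) ⟨Set.Ioc_subset_Icc_self hx, rfl⟩
  nlinarith [mul_le_mul_of_nonneg_left lam_mul_le lam_pos.le]
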